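/- arXiv:1901.10929 — 2 statements merged into one kernel-verified Lean document; each statement's English description precedes it below -/
import Mathlib

section
/- Let r be a positive integer, and let P be a Fano polygon with vertices v₁, …, v_k listed in counterclockwise cyclic order, such that det(v_i, v_{i+1}) = r for every i (indices modulo k). Then k ≤ 6. -/
/-!
Write `D i j = det (v i, v j)`. Since `det (v i + v (i+2), v (i+1)) = r - r = 0` and `v (i+1)` is
primitive, `v i + v (i+2)` is an integer multiple of `v (i+1)`; by induction `r` divides every
`D i j` (`dvd_det2`). Convexity at the edge `[v i, v (i+1)]` says `D i j - D (i+1) j < r` for every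
other vertex `v j`, so by divisibility `D i j ≤ D (i+1) j`. Walking once around the polygon from
`v (j+1)`, where `D (j+1) j = -r`, gives `-r ≤ D i j` for all `i` and `j` (`neg_le_det2`), hence
`|D i j| ≤ r` by antisymmetry.

Consequently each `v i` has coordinates in `{-1, 0, 1}` with respect to the basis `v 0, v 1`, and any
two of these coordinate vectors have determinant at most `1` in absolute value. The points `±(1,1)`
and `±(1,-1)` have mutual determinants `±2`, so only one of the two pairs can occur, and with
`±(1,0), ±(0,1)` this leaves at most six vertices.
-/

/-- det(u,v) = u₁v₂ − u₂v₁ for u, v ∈ ℤ². -/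
def det2 (u v : ℤ × ℤ) : ℤ := u.1 * v.2 - u.2 * v.1

/-- A vector of ℤ² is primitive if the gcd of its two coordinates is 1. -/
def IsPrimitive (u : ℤ × ℤ) : Prop := Int.gcd u.1 u.2 = 1

/-- `v : ZMod k → ℤ × ℤ` lists, in counterclockwise cyclic order, the vertices of a
Fano polygon: a convex lattice polygon (so k ≥ 3 and the points are in strictly
convex position, every other vertex lying strictly to the left of each directed
edge v_i → v_{i+1}) whose vertices are primitive and whose interior contains the
origin (the origin lies strictly to the left of each directed edge, which is
exactly 0 < det(v_i, v_{i+1})). -/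
def IsFanoCCW {k : ℕ} (v : ZMod k → ℤ × ℤ) : Prop :=
  3 ≤ k ∧ (∀ i, IsPrimitive (v i)) ∧ (∀ i, 0 < det2 (v i) (v (i + 1))) ∧
    ∀ i j : ZMod k, j ≠ i → j ≠ i + 1 → 0 < det2 (v (i + 1) - v i) (v j - v i)

/-- A vector parallel to a primitive vector is an integer multiple of it. -/
lemma exists_eq_mul_of_det2_eq_zero {u w : ℤ × ℤ} (hw : IsPrimitive w) (h : det2 u w = 0) :
    ∃ c : ℤ, u.1 = c * w.1 ∧ u.2 = c * w.2 := by
  have hb := Int.gcd_eq_gcd_ab w.1 w.2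
  unfold IsPrimitive at hw
  rw [hw] at hb
  unfold det2 at h
  push_cast at hb
  refine ⟨u.1 * Int.gcdA w.1 w.2 + u.2 * Int.gcdB w.1 w.2, ?_, ?_⟩
  · linear_combination u.1 * hb + Int.gcdB w.1 w.2 * h
  · linear_combination u.2 * hb - Int.gcdA w.1 w.2 * h

/-- Every vertex is written as `v (j + n)`; two consecutive values of `n` are carried because
`v (i + 2) = c * v (i + 1) - v i` is a second-order recurrence. -/
lemma dvd_det2 {r : ℤ} {k : ℕ} {v : ZMod k → ℤ × ℤ} (hprim : ∀ i, IsPrimitive (v i))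
    (hdet : ∀ i, det2 (v i) (v (i + 1)) = r) (j : ZMod k) (n : ℕ) :
    r ∣ det2 (v (j + n)) (v j) ∧ r ∣ det2 (v (j + n + 1)) (v j) := by
  induction n with
  | zero =>
    have h := hdet j
    simp only [Nat.cast_zero, add_zero]
    refine ⟨⟨0, by unfold det2; ring⟩, ⟨-1, ?_⟩⟩
    rw [← h]; unfold det2; ring
  | succ n ih =>
    obtain ⟨h1, h2⟩ := ih
    push_cast
    rw [← add_assoc]
    refine ⟨h2, ?_⟩
    have e1 := hdet (j + n)
    have e2 := hdet (j + n + 1)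
    have hz : det2 (v (j + n) + v (j + n + 1 + 1)) (v (j + n + 1)) = 0 := by
      unfold det2 at *
      simp only [Prod.fst_add, Prod.snd_add]
      linear_combination e1 - e2
    obtain ⟨c, hc1, hc2⟩ := exists_eq_mul_of_det2_eq_zero (hprim _) hz
    have : det2 (v (j + n + 1 + 1)) (v j)
        = c * det2 (v (j + n + 1)) (v j) - det2 (v (j + n)) (v j) := by
      unfold det2 at *
      simp only [Prod.fst_add, Prod.snd_add] at hc1 hc2
      linear_combination (v j).2 * hc1 - (v j).1 * hc2
    rw [this]
    exact dvd_sub (h2.mul_left c) h1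

/-- The value at `n = 0` is `-r`, and convexity together with divisibility by `r` makes the
determinant nondecreasing in `n` up to `v (j - 1)`. -/
lemma neg_le_det2 {r : ℤ} (hr : 0 < r) {k : ℕ} {v : ZMod k → ℤ × ℤ} (hF : IsFanoCCW v)
    (hdet : ∀ i, det2 (v i) (v (i + 1)) = r) (j : ZMod k) (n : ℕ) (hn : n + 1 < k) :
    -r ≤ det2 (v (j + n + 1)) (v j) := by
  obtain ⟨hk, hprim, -, hconv⟩ := hF
  induction n with
  | zero =>
    have h := hdet j
    simp only [Nat.cast_zero, add_zero]
    rw [← h]; unfold det2; apply le_of_eq; ring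
  | succ n ih =>
    have ih := ih (by omega)
    have hne : ∀ m : ℕ, 0 < m → m < k → j ≠ j + m := by
      intro m h0 hm h
      have h1 : ((m : ℕ) : ZMod k) = 0 := by simpa using h.symm
      rw [ZMod.natCast_eq_zero_iff] at h1
      exact absurd (Nat.le_of_dvd h0 h1) (by omega)
    have n1 := hne (n + 1) (by omega) (by omega)
    have n2 := hne (n + 1 + 1) (by omega) (by omega)
    push_cast at *
    have hc := hconv (j + (n + 1)) j n1 (by rw [add_assoc]; exact n2)
    obtain ⟨a, ha⟩ := (dvd_det2 hprim hdet j n).2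
    obtain ⟨b, hb⟩ := (dvd_det2 hprim hdet j (n + 1)).2
    have e := hdet (j + (n + 1))
    rw [add_assoc] at ha ih
    push_cast at hb
    have hlt : r * a < r * (b + 1) := by
      have : r * (b + 1) - r * a
          = det2 (v (j + (n + 1) + 1) - v (j + (n + 1))) (v j - v (j + (n + 1))) := by
        rw [mul_add, ← ha, ← hb, mul_one]
        nth_rewrite 1 [← e]
        unfold det2
        simp only [Prod.fst_sub, Prod.snd_sub]
        ring
      linarith
    have hab : a ≤ b := Int.lt_add_one_iff.mp (lt_of_mul_lt_mul_left hlt hr.le)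
    rw [ha] at ih
    rw [hb]
    nlinarith

/-- a Fano polygon all of whose edge cones have determinant r has at
most 6 vertices. -/
theorem card_vertices_le_six (r : ℤ) (hr : 0 < r)
    (k : ℕ) (v : ZMod k → ℤ × ℤ)
    (hF : IsFanoCCW v)
    (hdet : ∀ i, det2 (v i) (v (i + 1)) = r) :
    k ≤ 6 := by
  have hk : 3 ≤ k := hF.1
  have hprim := hF.2.1
  have hconv := hF.2.2.2
  have : NeZero k := ⟨by omega⟩
  have hrep : ∀ i j : ZMod k, ∃ n : ℕ, n < k ∧ i = j + n := fun i j =>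
    ⟨(i - j).val, ZMod.val_lt _, by simp⟩
  have hdvd : ∀ i j, r ∣ det2 (v i) (v j) := by
    intro i j
    obtain ⟨n, -, rfl⟩ := hrep i j
    exact (dvd_det2 hprim hdet j n).1
  have hlow : ∀ i j, -r ≤ det2 (v i) (v j) := by
    intro i j
    obtain ⟨n, hn, rfl⟩ := hrep i j
    cases n with
    | zero =>
      have : det2 (v j) (v j) = 0 := by unfold det2; ring
      simp only [Nat.cast_zero, add_zero, this]; omega
    | succ n =>
      have := neg_le_det2 hr hF hdet j n hn
      push_cast
      rwa [← add_assoc]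
  have hinj : Function.Injective v := by
    intro i j hij
    by_contra hne
    by_cases h1 : j = i + 1
    · have h := hdet i
      rw [← h1, ← hij] at h
      unfold det2 at h
      have : (0 : ℤ) = r := by rw [← h]; ring
      omega
    · have h := hconv i j (Ne.symm hne) h1
      rw [hij, sub_self] at h
      simp [det2] at h
  choose D hD using hdvd
  have hDlow : ∀ i j, -1 ≤ D i j := by
    intro i j
    have h := hlow i j
    rw [hD] at h
    by_contra hc
    nlinarith [show D i j ≤ -2 by omega]
  have hDanti : ∀ i j, D i j = - D j i := by
    intro i j
    have h : r * D i j = r * (- D j i) := by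
      rw [mul_neg, ← hD, ← hD]; unfold det2; ring
    exact mul_left_cancel₀ hr.ne' h
  have hDup : ∀ i j, D i j ≤ 1 := by
    intro i j
    have := hDlow j i
    have := hDanti i j
    omega
  have h01 : det2 (v 0) (v 1) = r := by simpa using hdet 0
  -- Cramer rule: the coordinates of `v i` in the basis `v 0, v 1` are `D i 1` and `D 0 i`.
  have hco : ∀ i, (v i).1 = D i 1 * (v 0).1 + D 0 i * (v 1).1 ∧
      (v i).2 = D i 1 * (v 0).2 + D 0 i * (v 1).2 := by
    intro i
    have e1 := hD i 1
    have e2 := hD 0 i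
    unfold det2 at e1 e2 h01
    constructor <;> apply mul_left_cancel₀ hr.ne'
    · linear_combination (v 0).1 * e1 + (v 1).1 * e2 - (v i).1 * h01
    · linear_combination (v 0).2 * e1 + (v 1).2 * e2 - (v i).2 * h01
  have hDD : ∀ i j, D i j = D i 1 * D 0 j - D 0 i * D j 1 := by
    intro i j
    apply mul_left_cancel₀ hr.ne'
    rw [← hD i j]
    unfold det2 at h01 ⊢
    rw [(hco i).1, (hco i).2, (hco j).1, (hco j).2]
    linear_combination (D i 1 * D 0 j - D 0 i * D j 1) * h01
  let f : ZMod k → ℤ × ℤ := fun i => (D i 1, D 0 i)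
  have hf : Function.Injective f := by
    intro i j hij
    have h1 : D i 1 = D j 1 := congrArg Prod.fst hij
    have h2 : D 0 i = D 0 j := congrArg Prod.snd hij
    apply hinj
    apply Prod.ext
    · rw [(hco i).1, (hco j).1, h1, h2]
    · rw [(hco i).2, (hco j).2, h1, h2]
  have hf0 : ∀ i, ¬ (D i 1 = 0 ∧ D 0 i = 0) := by
    rintro i ⟨h1, h2⟩
    have h := hprim i
    unfold IsPrimitive at h
    rw [(hco i).1, (hco i).2, h1, h2] at h
    simp at h
  have key : ∀ S : Finset (ℤ × ℤ), S.card = 6 → (∀ i, f i ∈ S) → k ≤ 6 := by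
    intro S hS hmem
    have := Finset.card_le_card_of_injOn (s := Finset.univ) f (fun i _ => hmem i) hf.injOn
    rwa [Finset.card_univ, ZMod.card, hS] at this
  have hcase : ∀ i, (D i 1 = -1 ∨ D i 1 = 0 ∨ D i 1 = 1) ∧
      (D 0 i = -1 ∨ D 0 i = 0 ∨ D 0 i = 1) := by
    intro i
    have := hDlow i 1
    have := hDup i 1
    have := hDlow 0 i
    have := hDup 0 i
    omega
  by_cases hA : ∃ i, D i 1 * D 0 i = 1
  · obtain ⟨i, hi⟩ := hA
    apply key {(1, 0), (-1, 0), (0, 1), (0, -1), (1, 1), (-1, -1)} (by decide)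
    intro j
    have h1 := hDlow i j
    have h2 := hDup i j
    rw [hDD] at h1 h2
    have h3 := hf0 j
    simp only [f]
    obtain ⟨a | a | a, b | b | b⟩ := hcase i <;> obtain ⟨c | c | c, d | d | d⟩ := hcase j <;>
      simp only [a, b] at hi h1 h2 <;> simp only [c, d] at h1 h2 h3 ⊢ <;>
      first | decide | (exfalso; revert hi h1 h2 h3; decide)
  · apply key {(1, 0), (-1, 0), (0, 1), (0, -1), (1, -1), (-1, 1)} (by decide)
    intro j
    have h1 : D j 1 * D 0 j ≠ 1 := fun h => hA ⟨j, h⟩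
    have h3 := hf0 j
    clear hA
    simp only [f]
    obtain ⟨c | c | c, d | d | d⟩ := hcase j <;> simp only [c, d] at h1 h3 ⊢ <;>
      first | decide | (exfalso; revert h1 h3; decide)
end

section
/- Let r be a positive integer with r ∉ {1, 2, 4}, and let P be a Fano polygon with vertices v₁, …, v_k listed in counterclockwise cyclic order such that for every i (indices modulo k): det(v_i, v_{i+1}) = r and g_i² < r, where g_i is the gcd of the two coordinates of v_{i+1} − v_i (so every edge cone of P is an R-cone of determinant r; equivalently, P has singularity content (0, {1/r(1,s₁), …, 1/r(1,s_k)})). Then k ∈ {3, 4, 5, 6}, and there exist a matrix M ∈ GL₂(ℤ) and an integer s such that M maps the vertex set of P onto one of the following nine sets: (1) {(0,1), (−r,s−1), (r,−s)} with gcd(r,s) = gcd(r,s−1) = 1; (2) {(0,1), (−r,s), (0,−1), (r,−s)} with gcd(r,s) = 1; (3) {(0,1), (−r,s+1), (0,−1), (r,−s)} with gcd(r,s) = gcd(r,s+1) = 1; (4) {(0,1), (−r,s), (r,−s−1), (r,−s)} with gcd(r,s) = gcd(r,s+1) = 1; (5) {(0,1), (−r,s), (−r,s−1), (r,−s)} with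 gcd(r,s) = gcd(r,s−1) = 1; (6) {(0,1), (−r,s+1), (−r,s), (0,−1), (r,−s)} with gcd(r,s) = gcd(r,s+1) = 1; (7) {(0,1), (−r,s), (−r,s−1), (0,−1), (r,−s)} with gcd(r,s) = gcd(r,s−1) = 1; (8) {(0,1), (−r,s+1), (−r,s), (r,−s−1), (r,−s)} with gcd(r,s) = gcd(r,s+1) = 1; (9) {(0,1), (−r,s+1), (−r,s), (0,−1), (r,−s−1), (r,−s)} with gcd(r,s) = gcd(r,s+1) = 1. -/
/-- The action of an integer 2×2 matrix on ℤ². -/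
def mApply (M : Matrix (Fin 2) (Fin 2) ℤ) (u : ℤ × ℤ) : ℤ × ℤ :=
  (M 0 0 * u.1 + M 0 1 * u.2, M 1 0 * u.1 + M 1 1 * u.2)

theorem natCast_ne_zero_of_lt {k n : ℕ} (h0 : 0 < n) (h : n < k) : (n : ZMod k) ≠ 0 := by
  rw [Ne, ZMod.natCast_eq_zero_iff]
  exact Nat.not_dvd_of_pos_of_lt h0 h

/-- If `u` is primitive, a vector parallel to `u` is an integer multiple of `u`. -/
theorem exists_smul_of_det2_eq_zero {u x : ℤ × ℤ} (hu : IsPrimitive u) (h : det2 u x = 0) :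
    ∃ a : ℤ, x = a • u := by
  obtain ⟨c, d, hcd⟩ := Int.isCoprime_iff_gcd_eq_one.mpr hu
  simp only [det2] at h
  refine ⟨c * x.1 + d * x.2, Prod.ext ?_ ?_⟩
  · simp only [Prod.smul_fst, smul_eq_mul]
    linear_combination (-x.1) * hcd - d * h
  · simp only [Prod.smul_snd, smul_eq_mul]
    linear_combination (-x.2) * hcd + c * h

theorem exists_recurrence {k : ℕ} {v : ZMod k → ℤ × ℤ} {r : ℤ} (hp : ∀ i, IsPrimitive (v i))
    (hdet : ∀ i, det2 (v i) (v (i + 1)) = r) :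
    ∃ b : ZMod k → ℤ, ∀ i, v (i + 2) = b i • v (i + 1) - v i := by
  have : ∀ i, ∃ a : ℤ, v (i + 2) + v i = a • v (i + 1) := fun i => by
    apply exists_smul_of_det2_eq_zero (hp _)
    have h1 := hdet i
    have h2 := hdet (i + 1)
    rw [show i + 1 + 1 = i + 2 by ring] at h2
    simp only [det2, Prod.fst_add, Prod.snd_add] at *
    linarith
  choose b hb using this
  exact ⟨b, fun i => by rw [← hb i]; abel⟩

/-- Coordinates with respect to two vectors of positive determinant are unique. -/
theorem coord_unique {w u : ℤ × ℤ} {p q p' q' : ℤ} (h : 0 < det2 w u)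
    (he : p • w + q • u = p' • w + q' • u) : p = p' ∧ q = q' := by
  have h1 := congrArg Prod.fst he
  have h2 := congrArg Prod.snd he
  simp only [det2, Prod.fst_add, Prod.snd_add, Prod.smul_fst, Prod.smul_snd, smul_eq_mul] at *
  constructor
  · apply mul_right_cancel₀ h.ne'
    linear_combination u.2 * h1 - u.1 * h2
  · apply mul_right_cancel₀ h.ne'
    linear_combination w.1 * h2 - w.2 * h1

section

variable {k : ℕ} {v : ZMod k → ℤ × ℤ} {b : ZMod k → ℤ}

/-- A vertex off the edge `[v i, v (i + 1)]` lies strictly below the line `p + q = 1` spanned by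
that edge in the coordinates `p, q` with respect to `v i, v (i + 1)`. -/
theorem coord_add_nonpos (hF : IsFanoCCW v) {i j : ZMod k} {p q : ℤ}
    (hj : v j = p • v i + q • v (i + 1)) (h0 : j ≠ i) (h1 : j ≠ i + 1) : p + q ≤ 0 := by
  obtain ⟨-, -, hd, hc⟩ := hF
  have h := hc i j h0 h1
  have hd := hd i
  rw [hj] at h
  have h' : 0 < det2 (v i) (v (i + 1)) * (1 - p - q) := by
    convert h using 1
    simp only [det2, Prod.fst_add, Prod.snd_add, Prod.fst_sub, Prod.snd_sub, Prod.smul_fst,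
      Prod.smul_snd, smul_eq_mul]
    ring
  have := pos_of_mul_pos_right h' hd.le
  omega

theorem b_le_one (hF : IsFanoCCW v) (hb : ∀ i, v (i + 2) = b i • v (i + 1) - v i) (i : ZMod k) :
    b i ≤ 1 := by
  have hk := hF.1
  have h2 := natCast_ne_zero_of_lt (k := k) (n := 2) (by norm_num) (by omega)
  have h1 := natCast_ne_zero_of_lt (k := k) (n := 1) (by norm_num) (by omega)
  push_cast at h1 h2
  have := coord_add_nonpos hF (i := i) (j := i + 2) (p := -1) (q := b i) (by rw [hb]; module)
    (by simpa using h2) (fun h => h1 (by linear_combination h))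
  omega

theorem coord_nonpos (hF : IsFanoCCW v) (hb : ∀ i, v (i + 2) = b i • v (i + 1) - v i)
    {i j : ZMod k} {p q : ℤ} (hj : v j = p • v (i + 1) + q • v (i + 2)) (h0 : j ≠ i)
    (h1 : j ≠ i + 1) (h2 : j ≠ i + 2) : p ≤ 0 := by
  have e : i + 1 + 1 = i + 2 := by ring
  have hb1 := b_le_one hF hb i
  have A := coord_add_nonpos hF (i := i + 1) (by rw [e]; exact hj) h1 (by rwa [e])
  have B := coord_add_nonpos hF (i := i) (j := j) (p := -q) (q := p + q * b i)
    (by rw [hj, hb]; module) h0 h1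
  by_contra! hp
  nlinarith

theorem v_three (hb : ∀ i, v (i + 2) = b i • v (i + 1) - v i) (i : ZMod k) :
    v (i + 3) = (-b (i + 1)) • v i + (b i * b (i + 1) - 1) • v (i + 1) := by
  have h := hb (i + 1)
  rw [show i + 1 + 2 = i + 3 by ring, show i + 1 + 1 = i + 2 by ring, hb i] at h
  rw [h]; module

theorem v_four (hb : ∀ i, v (i + 2) = b i • v (i + 1) - v i) (i : ZMod k) :
    v (i + 4) = (1 - b (i + 1) * b (i + 2)) • v i +
      (b (i + 2) * (b i * b (i + 1) - 1) - b i) • v (i + 1) := by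
  have h := hb (i + 2)
  rw [show i + 2 + 2 = i + 4 by ring, show i + 2 + 1 = i + 3 by ring, hb i, v_three hb i] at h
  rw [h]; module

theorem v_five (hb : ∀ i, v (i + 2) = b i • v (i + 1) - v i) (i : ZMod k) :
    v (i + 5) = (b (i + 3) * (1 - b (i + 1) * b (i + 2)) + b (i + 1)) • v i +
      (b (i + 3) * (b (i + 2) * (b i * b (i + 1) - 1) - b i) - (b i * b (i + 1) - 1)) •
        v (i + 1) := by
  have h := hb (i + 3)
  rw [show i + 3 + 2 = i + 5 by ring, show i + 3 + 1 = i + 4 by ring, v_four hb i,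
    v_three hb i] at h
  rw [h]; module

theorem b_nonneg (hF : IsFanoCCW v) (hb : ∀ i, v (i + 2) = b i • v (i + 1) - v i) (hk : 5 ≤ k)
    (i : ZMod k) : 0 ≤ b i := by
  have h2 := natCast_ne_zero_of_lt (k := k) (n := 2) (by norm_num) (by omega)
  have h3 := natCast_ne_zero_of_lt (k := k) (n := 3) (by norm_num) (by omega)
  have h4 := natCast_ne_zero_of_lt (k := k) (n := 4) (by norm_num) (by omega)
  push_cast at h2 h3 h4
  have e := v_three hb (i - 1)
  have := coord_nonpos hF hb (i := i - 2) (j := i + 2) (p := -b i) (q := b (i - 1) * b i - 1)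
    (by
      rw [show i - 2 + 1 = i - 1 by ring, show i - 2 + 2 = i by ring]
      rwa [show i - 1 + 3 = i + 2 by ring, show i - 1 + 1 = i by ring] at e)
    (fun h => h4 (by linear_combination h)) (fun h => h3 (by linear_combination h))
    (fun h => h2 (by linear_combination h))
  omega

theorem b_eq_one (hF : IsFanoCCW v) (hb : ∀ i, v (i + 2) = b i • v (i + 1) - v i) (hk : 6 ≤ k)
    (i : ZMod k) : b i = 1 := by
  have h3 := natCast_ne_zero_of_lt (k := k) (n := 3) (by norm_num) (by omega)
  have h4 := natCast_ne_zero_of_lt (k := k) (n := 4) (by norm_num) (by omega)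
  have h5 := natCast_ne_zero_of_lt (k := k) (n := 5) (by norm_num) (by omega)
  push_cast at h3 h4 h5
  have e := v_four hb (i - 1)
  have := coord_nonpos hF hb (i := i - 2) (j := i + 3) (p := 1 - b i * b (i + 1))
    (q := b (i + 1) * (b (i - 1) * b i - 1) - b (i - 1))
    (by
      rw [show i - 2 + 1 = i - 1 by ring, show i - 2 + 2 = i by ring]
      rwa [show i - 1 + 4 = i + 3 by ring, show i - 1 + 1 = i by ring,
        show i - 1 + 2 = i + 1 by ring] at e)
    (fun h => h5 (by linear_combination h)) (fun h => h4 (by linear_combination h))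
    (fun h => h3 (by linear_combination h))
  have a1 := b_le_one hF hb i
  have a2 := b_le_one hF hb (i + 1)
  have a3 := b_nonneg hF hb (by omega) i
  have a4 := b_nonneg hF hb (by omega) (i + 1)
  nlinarith

theorem vertices_injective (hF : IsFanoCCW v) : Function.Injective v := by
  obtain ⟨-, -, hd, hc⟩ := hF
  intro i j hij
  by_contra hne
  by_cases h : j = i + 1
  · have := hd i
    rw [← h, ← hij] at this
    simp [det2, mul_comm] at this
  · have := hc i j (Ne.symm hne) h
    rw [← hij] at this
    simp [det2] at this

theorem k_le_six (hF : IsFanoCCW v) (hb : ∀ i, v (i + 2) = b i • v (i + 1) - v i) : k ≤ 6 := by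
  by_contra! hk
  have h := v_five hb (0 + 1)
  simp only [b_eq_one hF hb (by omega : 6 ≤ k)] at h
  have e0 : v (0 + 2) = v (0 + 1) - v 0 := by rw [hb, b_eq_one hF hb (by omega), one_smul]
  have h6 : v (0 + 1 + 5) = v 0 := by
    rw [h, show (0 : ZMod k) + 1 + 1 = 0 + 2 by ring, e0]; module
  have := vertices_injective hF h6
  apply natCast_ne_zero_of_lt (k := k) (n := 6) (by norm_num) hk
  push_cast
  linear_combination this

end

theorem mApply_add (M : Matrix (Fin 2) (Fin 2) ℤ) (x y : ℤ × ℤ) :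
    mApply M (x + y) = mApply M x + mApply M y := by
  ext <;> simp [mApply] <;> ring

theorem mApply_smul (M : Matrix (Fin 2) (Fin 2) ℤ) (a : ℤ) (x : ℤ × ℤ) :
    mApply M (a • x) = a • mApply M x := by
  ext <;> simp [mApply] <;> ring

/-- Two vectors `w`, `u` with `u` primitive can be brought to `(det (w, u), -s)` and `(0, 1)` by a
unimodular transformation; such a transformation preserves primitivity. -/
theorem exists_normal_form {w u : ℤ × ℤ} (hu : IsPrimitive u) :
    ∃ (M : Matrix (Fin 2) (Fin 2) ℤ) (s : ℤ), IsUnit M.det ∧ mApply M u = (0, 1) ∧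
      mApply M w = (det2 w u, -s) ∧ ∀ x, IsPrimitive x → IsPrimitive (mApply M x) := by
  obtain ⟨c, d, hcd⟩ := Int.isCoprime_iff_gcd_eq_one.mpr hu
  refine ⟨!![u.2, -u.1; c, d], -(c * w.1 + d * w.2), ?_, ?_, ?_, ?_⟩
  · rw [Matrix.det_fin_two_of, show u.2 * d - -u.1 * c = 1 by linear_combination hcd]
    exact isUnit_one
  · ext
    · simp [mApply]; ring
    · simpa [mApply] using hcd
  · ext
    · simp [mApply, det2]; ring
    · simp [mApply]
  · intro x hx
    obtain ⟨e, f, hef⟩ := Int.isCoprime_iff_gcd_eq_one.mpr hx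
    apply Int.isCoprime_iff_gcd_eq_one.mp
    -- the row vector `(e, f)` times the inverse matrix
    refine ⟨e * d - f * c, e * u.1 + f * u.2, ?_⟩
    simp [mApply]
    linear_combination (e * x.1 + f * x.2) * hcd + hef

theorem gcd_eq_one_of_neg {r s : ℤ} (h : IsPrimitive (r, -s)) : Int.gcd r s = 1 := by
  simpa [IsPrimitive] using h

theorem gcd_eq_one_of_neg_left {r s : ℤ} (h : IsPrimitive (-r, s)) : Int.gcd r s = 1 := by
  simpa [IsPrimitive] using h

/-- a Fano polygon with r ∉ {1,2,4} all of whose edge cones have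
determinant r and are R-cones (lattice length squared < r) has k ∈ {3,4,5,6}
vertices, and its vertex set is mapped by some M ∈ GL₂(ℤ) onto one of nine
explicit model vertex sets. -/
theorem classification_of_fano_with_R_cones (r : ℤ) (hr : 0 < r)
    (hr1 : r ≠ 1) (hr2 : r ≠ 2) (hr4 : r ≠ 4)
    (k : ℕ) (v : ZMod k → ℤ × ℤ)
    (hF : IsFanoCCW v)
    (hdet : ∀ i, det2 (v i) (v (i + 1)) = r)
    (hR : ∀ i, ((Int.gcd ((v (i + 1)).1 - (v i).1) ((v (i + 1)).2 - (v i).2) : ℤ)) ^ 2 < r) :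
    (k = 3 ∨ k = 4 ∨ k = 5 ∨ k = 6) ∧
      ∃ (M : Matrix (Fin 2) (Fin 2) ℤ) (s : ℤ), IsUnit M.det ∧
        ((Set.range (fun i => mApply M (v i)) =
              ({(0, 1), (-r, s - 1), (r, -s)} : Set (ℤ × ℤ)) ∧
            Int.gcd r s = 1 ∧ Int.gcd r (s - 1) = 1) ∨
         (Set.range (fun i => mApply M (v i)) =
              ({(0, 1), (-r, s), (0, -1), (r, -s)} : Set (ℤ × ℤ)) ∧
            Int.gcd r s = 1) ∨
         (Set.range (fun i => mApply M (v i)) =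
              ({(0, 1), (-r, s + 1), (0, -1), (r, -s)} : Set (ℤ × ℤ)) ∧
            Int.gcd r s = 1 ∧ Int.gcd r (s + 1) = 1) ∨
         (Set.range (fun i => mApply M (v i)) =
              ({(0, 1), (-r, s), (r, -s - 1), (r, -s)} : Set (ℤ × ℤ)) ∧
            Int.gcd r s = 1 ∧ Int.gcd r (s + 1) = 1) ∨
         (Set.range (fun i => mApply M (v i)) =
              ({(0, 1), (-r, s), (-r, s - 1), (r, -s)} : Set (ℤ × ℤ)) ∧
            Int.gcd r s = 1 ∧ Int.gcd r (s - 1) = 1) ∨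
         (Set.range (fun i => mApply M (v i)) =
              ({(0, 1), (-r, s + 1), (-r, s), (0, -1), (r, -s)} : Set (ℤ × ℤ)) ∧
            Int.gcd r s = 1 ∧ Int.gcd r (s + 1) = 1) ∨
         (Set.range (fun i => mApply M (v i)) =
              ({(0, 1), (-r, s), (-r, s - 1), (0, -1), (r, -s)} : Set (ℤ × ℤ)) ∧
            Int.gcd r s = 1 ∧ Int.gcd r (s - 1) = 1) ∨
         (Set.range (fun i => mApply M (v i)) =
              ({(0, 1), (-r, s + 1), (-r, s), (r, -s - 1), (r, -s)} : Set (ℤ × ℤ)) ∧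
            Int.gcd r s = 1 ∧ Int.gcd r (s + 1) = 1) ∨
         (Set.range (fun i => mApply M (v i)) =
              ({(0, 1), (-r, s + 1), (-r, s), (0, -1), (r, -s - 1), (r, -s)} : Set (ℤ × ℤ)) ∧
            Int.gcd r s = 1 ∧ Int.gcd r (s + 1) = 1)) := by
  have hk3 := hF.1
  have hp := hF.2.1
  obtain ⟨b, hb⟩ := exists_recurrence hp hdet
  have hk6 := k_le_six hF hb
  have hle := b_le_one hF hb
  have hpos : ∀ i, 0 < det2 (v i) (v (i + 1)) := hF.2.2.1
  refine ⟨by omega, ?_⟩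
  have hcases : k = 3 ∨ k = 4 ∨ k = 5 ∨ k = 6 := by omega
  rcases hcases with rfl | rfl | rfl | rfl
  · -- `k = 3`: closing up forces `v 2 = -v 0 - v 1`
    have h3 := v_three hb 0
    rw [show (0 : ZMod 3) + 3 = 0 by decide] at h3
    obtain ⟨e1, e2⟩ := coord_unique (hpos 0) (p := 1) (q := 0) (by rw [← h3]; module)
    have hb0 : b 0 = -1 := by
      have : b (0 + 1) = -1 := by linarith
      rw [this] at e2; linarith
    obtain ⟨M, s, hM, hMu, hMw, hMp⟩ := exists_normal_form (w := v 0) (hp (0 + 1))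
    rw [hdet] at hMw
    have m2 : mApply M (v (0 + 2)) = (-r, s - 1) := by
      rw [show v (0 + 2) = (-1 : ℤ) • v 0 + (-1 : ℤ) • v (0 + 1) by rw [hb, hb0]; module,
        mApply_add, mApply_smul, mApply_smul, hMu, hMw]
      ext <;> simp; ring
    refine ⟨M, s, hM, Or.inl ⟨?_, gcd_eq_one_of_neg (hMw ▸ hMp _ (hp 0)),
      gcd_eq_one_of_neg_left (m2 ▸ hMp _ (hp _))⟩⟩
    ext x
    simp only [Set.mem_range, Set.mem_insert_iff, Set.mem_singleton_iff, ← hMu, ← hMw, ← m2]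
    constructor
    · rintro ⟨j, rfl⟩
      have hj : ∀ j : ZMod 3, j = 0 ∨ j = 0 + 1 ∨ j = 0 + 2 := by decide
      rcases hj j with rfl | rfl | rfl <;> simp
    · rintro (rfl | rfl | rfl) <;> exact ⟨_, rfl⟩
  · -- `k = 4`: closing up gives `b (i + 2) = - b i` and `b i * b (i + 1) = 0`
    have h4 : ∀ i, b (i + 1) * b (i + 2) = 0 ∧ b (i + 2) = - b i := fun i => by
      have h4 := v_four hb i
      rw [(by decide : ∀ i : ZMod 4, i + 4 = i) i] at h4
      obtain ⟨e1, e2⟩ := coord_unique (hpos i) (p := 1) (q := 0) (by rw [← h4]; module)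
      have e3 : b (i + 1) * b (i + 2) = 0 := by linarith
      exact ⟨e3, by linear_combination e2 + b i * e3⟩
    have hj : ∀ i j : ZMod 4, j = i ∨ j = i + 1 ∨ j = i + 2 ∨ j = i + 3 := by decide
    by_cases h1 : ∃ i, b i = 1
    · obtain ⟨i, hi⟩ := h1
      have hi1 : b (i + 1) = 0 := by
        obtain ⟨e1, e2⟩ := h4 i
        rw [e2, hi] at e1; linarith
      have h3 := v_three hb i
      obtain ⟨M, s, hM, hMu, hMw, hMp⟩ := exists_normal_form (w := v i) (hp (i + 1))
      rw [hdet] at hMw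
      have m2 : mApply M (v (i + 2)) = (-r, s + 1) := by
        rw [show v (i + 2) = (-1 : ℤ) • v i + (1 : ℤ) • v (i + 1) by rw [hb, hi]; module,
          mApply_add, mApply_smul, mApply_smul, hMu, hMw]
        ext <;> simp
      have m3 : mApply M (v (i + 3)) = (0, -1) := by
        rw [h3, hi1, hi, mApply_add, mApply_smul, mApply_smul, hMu, hMw]
        ext <;> simp
      refine ⟨M, s, hM, Or.inr (Or.inr (Or.inl ⟨?_, gcd_eq_one_of_neg (hMw ▸ hMp _ (hp i)),
        gcd_eq_one_of_neg_left (m2 ▸ hMp _ (hp _))⟩))⟩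
      ext x
      simp only [Set.mem_range, Set.mem_insert_iff, Set.mem_singleton_iff, ← hMu, ← hMw, ← m2,
        ← m3]
      constructor
      · rintro ⟨j, rfl⟩
        rcases hj i j with rfl | rfl | rfl | rfl <;> simp
      · rintro (rfl | rfl | rfl | rfl) <;> exact ⟨_, rfl⟩
    · push Not at h1
      have h0 : ∀ i, b i = 0 := fun i => by
        have e := (h4 i).2
        have := hle i
        have := hle (i + 2)
        have := h1 i
        have := h1 (i + 2)
        omega
      have h3 := v_three hb 0
      obtain ⟨M, s, hM, hMu, hMw, hMp⟩ := exists_normal_form (w := v 0) (hp (0 + 1))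
      rw [hdet] at hMw
      have m2 : mApply M (v (0 + 2)) = (-r, s) := by
        rw [show v (0 + 2) = (-1 : ℤ) • v 0 + (0 : ℤ) • v (0 + 1) by rw [hb, h0]; module,
          mApply_add, mApply_smul, mApply_smul, hMu, hMw]
        ext <;> simp
      have m3 : mApply M (v (0 + 3)) = (0, -1) := by
        rw [h3, h0, h0, mApply_add, mApply_smul, mApply_smul, hMu, hMw]
        ext <;> simp
      refine ⟨M, s, hM, Or.inr (Or.inl ⟨?_, gcd_eq_one_of_neg (hMw ▸ hMp _ (hp 0))⟩)⟩
      ext x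
      simp only [Set.mem_range, Set.mem_insert_iff, Set.mem_singleton_iff, ← hMu, ← hMw, ← m2,
        ← m3]
      constructor
      · rintro ⟨j, rfl⟩
        rcases hj 0 j with rfl | rfl | rfl | rfl <;> simp
      · rintro (rfl | rfl | rfl | rfl) <;> exact ⟨_, rfl⟩
  · -- `k = 5`: `b` takes values in `{0, 1}`, and closing up forces three consecutive ones
    have hge := b_nonneg hF hb le_rfl
    have h01 : ∀ i, b i = 0 ∨ b i = 1 := fun i => by
      have := hge i
      have := hle i
      omega
    have hclose : ∀ i, b (i + 3) * (1 - b (i + 1) * b (i + 2)) + b (i + 1) = 1 ∧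
        b (i + 3) * (b (i + 2) * (b i * b (i + 1) - 1) - b i) - (b i * b (i + 1) - 1) = 0 :=
      fun i => by
        have h5 := v_five hb i
        rw [(by decide : ∀ i : ZMod 5, i + 5 = i) i] at h5
        obtain ⟨e1, e2⟩ := coord_unique (hpos i) (p := 1) (q := 0) (by rw [← h5]; module)
        exact ⟨e1.symm, e2.symm⟩
    have h111 : ∃ i, b i = 1 ∧ b (i + 1) = 1 ∧ b (i + 2) = 1 := by
      have c0 := hclose 0
      have c1 := hclose 1
      have c2 := hclose 2
      have c3 := hclose 3
      have c4 := hclose 4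
      by_contra! hno
      have n0 := hno 0
      have n1 := hno 1
      have n2 := hno 2
      have n3 := hno 3
      have n4 := hno 4
      reduce_mod_char at c0 c1 c2 c3 c4 n0 n1 n2 n3 n4
      rcases h01 0 with a0 | a0 <;> rcases h01 1 with a1 | a1 <;> rcases h01 2 with a2 | a2 <;>
        rcases h01 3 with a3 | a3 <;> rcases h01 4 with a4 | a4 <;>
        simp [a0, a1, a2, a3, a4] at c0 c1 c2 c3 c4 n0 n1 n2 n3 n4
    obtain ⟨i, i0, i1, i2⟩ := h111
    obtain ⟨M, s, hM, hMu, hMw, hMp⟩ := exists_normal_form (w := v i) (hp (i + 1))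
    rw [hdet] at hMw
    have m2 : mApply M (v (i + 2)) = (-r, s + 1) := by
      rw [show v (i + 2) = (-1 : ℤ) • v i + (1 : ℤ) • v (i + 1) by rw [hb, i0]; module,
        mApply_add, mApply_smul, mApply_smul, hMu, hMw]
      ext <;> simp
    have m3 : mApply M (v (i + 3)) = (-r, s) := by
      rw [v_three hb, i0, i1, mApply_add, mApply_smul, mApply_smul, hMu, hMw]
      ext <;> simp
    have m4 : mApply M (v (i + 4)) = (0, -1) := by
      rw [v_four hb, i0, i1, i2, mApply_add, mApply_smul, mApply_smul, hMu, hMw]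
      ext <;> simp
    refine ⟨M, s, hM, Or.inr (Or.inr (Or.inr (Or.inr (Or.inr (Or.inl ⟨?_,
      gcd_eq_one_of_neg (hMw ▸ hMp _ (hp i)),
      gcd_eq_one_of_neg_left (m2 ▸ hMp _ (hp _))⟩)))))⟩
    ext x
    simp only [Set.mem_range, Set.mem_insert_iff, Set.mem_singleton_iff, ← hMu, ← hMw, ← m2,
      ← m3, ← m4]
    constructor
    · rintro ⟨j, rfl⟩
      have hj : ∀ i j : ZMod 5, j = i ∨ j = i + 1 ∨ j = i + 2 ∨ j = i + 3 ∨ j = i + 4 := by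
        decide
      rcases hj i j with rfl | rfl | rfl | rfl | rfl <;> simp
    · rintro (rfl | rfl | rfl | rfl | rfl) <;> exact ⟨_, rfl⟩
  · -- `k = 6`: the recurrence is `v (i + 2) = v (i + 1) - v i`
    have h1 := b_eq_one hF hb le_rfl
    obtain ⟨M, s, hM, hMu, hMw, hMp⟩ := exists_normal_form (w := v 0) (hp (0 + 1))
    rw [hdet] at hMw
    have m2 : mApply M (v (0 + 2)) = (-r, s + 1) := by
      rw [show v (0 + 2) = (-1 : ℤ) • v 0 + (1 : ℤ) • v (0 + 1) by rw [hb, h1]; module,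
        mApply_add, mApply_smul, mApply_smul, hMu, hMw]
      ext <;> simp
    have m3 : mApply M (v (0 + 3)) = (-r, s) := by
      rw [v_three hb, h1, h1, mApply_add, mApply_smul, mApply_smul, hMu, hMw]
      ext <;> simp
    have m4 : mApply M (v (0 + 4)) = (0, -1) := by
      rw [v_four hb, h1, h1, h1, mApply_add, mApply_smul, mApply_smul, hMu, hMw]
      ext <;> simp
    have m5 : mApply M (v (0 + 5)) = (r, -s - 1) := by
      rw [v_five hb, h1, h1, h1, h1, mApply_add, mApply_smul, mApply_smul, hMu, hMw]
      ext <;> simp; ring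
    refine ⟨M, s, hM, Or.inr (Or.inr (Or.inr (Or.inr (Or.inr (Or.inr (Or.inr (Or.inr ⟨?_,
      gcd_eq_one_of_neg (hMw ▸ hMp _ (hp 0)),
      gcd_eq_one_of_neg_left (m2 ▸ hMp _ (hp _))⟩)))))))⟩
    ext x
    simp only [Set.mem_range, Set.mem_insert_iff, Set.mem_singleton_iff, ← hMu, ← hMw, ← m2,
      ← m3, ← m4, ← m5]
    constructor
    · rintro ⟨j, rfl⟩
      have hj : ∀ j : ZMod 6, j = 0 ∨ j = 0 + 1 ∨ j = 0 + 2 ∨ j = 0 + 3 ∨ j = 0 + 4 ∨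
          j = 0 + 5 := by decide
      rcases hj j with rfl | rfl | rfl | rfl | rfl | rfl <;> simp
    · rintro (rfl | rfl | rfl | rfl | rfl | rfl) <;> exact ⟨_, rfl⟩
end
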